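/- There exists a binary self-dual code of length 68 and minimum (nonzero) weight 12 that has exactly 1158 codewords of weight 12 and exactly 13272 codewords of weight 14 (i.e. a self-dual [68,34,12] code with weight enumerator W_{68,2} with γ = 1 and β = 179). -/

import Mathlib

/-- The dual of a code (submodule of `ι → R`) with respect to the standard bilinear form. -/
def dualCode {R : Type*} [CommRing R] {ι : Type*} [Fintype ι]
    (C : Submodule R (ι → R)) : Submodule R (ι → R) where
  carrier := {x | ∀ c ∈ C, ∑ i, x i * c i = 0}
  add_mem' := by
    intro a b ha hb c hc
    simp only [Set.mem_setOf_eq] at ha hb ⊢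
    simp [Pi.add_apply, add_mul, Finset.sum_add_distrib, ha c hc, hb c hc]
  zero_mem' := by
    intro c hc
    simp
  smul_mem' := by
    intro r a ha c hc
    simp only [Set.mem_setOf_eq] at ha ⊢
    simp [Pi.smul_apply, smul_eq_mul, mul_assoc, ← Finset.mul_sum, ha c hc]

/-- A code is self-dual if it equals its dual. -/
def IsSelfDual {R : Type*} [CommRing R] {ι : Type*} [Fintype ι]
    (C : Submodule R (ι → R)) : Prop :=
  C = dualCode C

/-!
For a self-dual binary code `C`, the MacWilliams identity expresses the weight distribution of `C`
through itself, and a signed version of it expresses the weight distribution of the shadow of `C`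
through that of `C`. Their sum involves only the doubly-even codewords and their difference only the
others. For length 68 and minimum weight 12, pairing them with a polynomial that vanishes at the
middle weights congruent to 0 (respectively 2) modulo 4 leaves only the count for weight 12
(respectively 14), as a linear function of the numbers of shadow vectors of weight at most 10.

The code here has a generator matrix `(1 | A)` with `A * Aᵀ = 1`, so its two halves play symmetric
roles and a word of weight at most 10 has a half of weight at most 5. Running through these lighter
halves shows that the code has no nonzero word of weight at most 10 and that its shadow has one
vector of weight 6, 165 vectors of weight 10 and no other vector of even weight at most 10.
-/

open Finset Matrix Polynomial

section BinaryWeight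

variable {ι : Type*} [Fintype ι]

theorem natCast_hammingNorm (v : ι → ZMod 2) : (hammingNorm v : ZMod 2) = ∑ i, v i := by
  rw [hammingNorm, card_filter, Nat.cast_sum]
  refine sum_congr rfl fun i _ => ?_
  generalize v i = a
  revert a
  decide

theorem dotProduct_eq_natCast_hammingNorm_mul (v w : ι → ZMod 2) :
    v ⬝ᵥ w = (hammingNorm (v * w) : ZMod 2) :=
  (natCast_hammingNorm (v * w)).symm

theorem hammingNorm_add_add_two_mul (v w : ι → ZMod 2) :
    hammingNorm (v + w) + 2 * hammingNorm (v * w) = hammingNorm v + hammingNorm w := by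
  have h_bit : ∀ a b : ZMod 2, ((if a + b ≠ 0 then 1 else 0) + 2 * if a * b ≠ 0 then 1 else 0) =
      (if a ≠ 0 then 1 else 0) + if b ≠ 0 then 1 else 0 := by decide
  simp only [hammingNorm, card_filter, mul_sum, ← sum_add_distrib]
  exact sum_congr rfl fun i _ => h_bit (v i) (w i)

theorem hammingNorm_one_add (v : ι → ZMod 2) :
    hammingNorm (1 + v) = Fintype.card ι - hammingNorm v := by
  have h := hammingNorm_add_add_two_mul 1 v
  have h_one : hammingNorm (1 : ι → ZMod 2) = Fintype.card ι := by
    simp [hammingNorm]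
  rw [one_mul, h_one] at h
  lia

end BinaryWeight

section MacWilliams

/-- The value at `w` of the binary Krawtchouk polynomial of degree `j` for length `n`. -/
def krawtchouk (n j w : ℕ) : ℤ :=
  ∑ i ∈ range (j + 1), (-1) ^ i * w.choose i * (n - w).choose (j - i)

theorem coeff_one_sub_X_pow_mul_one_add_X_pow (n j w : ℕ) :
    ((1 - X : ℤ[X]) ^ w * (1 + X) ^ (n - w)).coeff j = krawtchouk n j w := by
  have h_sub : (1 - X : ℤ[X]) ^ w = ((1 + X) ^ w).comp (C (-1) * X) := by
    simp [sub_eq_add_neg]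
  rw [coeff_mul, Nat.sum_antidiagonal_eq_sum_range_succ_mk, krawtchouk]
  refine sum_congr rfl fun i _ => ?_
  rw [h_sub, comp_C_mul_X_coeff, coeff_one_add_X_pow, coeff_one_add_X_pow]
  ring

/-- The nontrivial character `a ↦ (-1) ^ a` of the additive group of `𝔽₂`. -/
def signChar : AddChar (ZMod 2) ℤ :=
  AddChar.zmodChar 2 (ζ := -1) (by norm_num)

theorem signChar_natCast (k : ℕ) : signChar (k : ZMod 2) = (-1) ^ k :=
  AddChar.zmodChar_apply' _ k

theorem signChar_sum {ι : Type*} (s : Finset ι) (f : ι → ZMod 2) :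
    signChar (∑ i ∈ s, f i) = ∏ i ∈ s, signChar (f i) :=
  map_prod signChar.toMonoidHom (fun i => Multiplicative.ofAdd (f i)) s

theorem signChar_eq_one_iff (a : ZMod 2) : signChar a = 1 ↔ a = 0 := by
  decide +revert

variable {ι : Type*} [Fintype ι]

theorem sum_signChar_dotProduct_mul_X_pow [DecidableEq ι] (c : ι → ZMod 2) :
    ∑ v : ι → ZMod 2, C (signChar (v ⬝ᵥ c)) * X ^ hammingNorm v =
      (1 - X : ℤ[X]) ^ hammingNorm c * (1 + X) ^ (Fintype.card ι - hammingNorm c) := by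
  classical
  have h_prod (v : ι → ZMod 2) : C (signChar (v ⬝ᵥ c)) * (X : ℤ[X]) ^ hammingNorm v =
      ∏ i, C (signChar (v i * c i)) * X ^ (if v i ≠ 0 then 1 else 0) := by
    rw [prod_mul_distrib, prod_pow_eq_pow_sum, hammingNorm, card_filter, dotProduct,
      signChar_sum, map_prod]
  have h_factor (i : ι) :
      ∑ a : ZMod 2, C (signChar (a * c i)) * (X : ℤ[X]) ^ (if a ≠ 0 then 1 else 0) =
        if c i ≠ 0 then 1 - X else 1 + X := by
    have h_neg : signChar 1 = -1 := by decide
    rw [show (univ : Finset (ZMod 2)) = {0, 1} from rfl, sum_pair zero_ne_one]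
    obtain h | h : c i = 0 ∨ c i = 1 := by generalize c i = a; revert a; decide
    all_goals simp [h, h_neg, sub_eq_add_neg]
  have h_card : #{i | ¬ c i ≠ 0} = Fintype.card ι - hammingNorm c := by
    rw [← compl_filter, card_compl, hammingNorm]
  simp only [h_prod]
  rw [← Fintype.prod_sum fun i a =>
    C (signChar (a * c i)) * (X : ℤ[X]) ^ (if a ≠ 0 then 1 else 0)]
  simp only [h_factor]
  rw [prod_ite, prod_const, prod_const, h_card, hammingNorm]

theorem sum_signChar_dotProduct [DecidableEq ι] (c : ι → ZMod 2) (j : ℕ) :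
    ∑ v : ι → ZMod 2 with hammingNorm v = j, signChar (v ⬝ᵥ c) =
      krawtchouk (Fintype.card ι) j (hammingNorm c) := by
  rw [← coeff_one_sub_X_pow_mul_one_add_X_pow, ← sum_signChar_dotProduct_mul_X_pow,
    finsetSum_coeff, sum_filter]
  simp only [coeff_C_mul_X_pow, eq_comm]

/-- The number of vectors of Hamming weight `w` in `S`; as `w` varies, the weight distribution
of `S`. -/
noncomputable def weightCount (S : Set (ι → ZMod 2)) (w : ℕ) : ℕ :=
  {v | v ∈ S ∧ hammingNorm v = w}.ncard

theorem weightCount_eq_card [DecidableEq ι] (S : Set (ι → ZMod 2)) [DecidablePred (· ∈ S)] (w : ℕ) :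
    weightCount S w = #{v | v ∈ S ∧ hammingNorm v = w} := by
  rw [weightCount, ← Set.ncard_coe_finset, coe_filter_univ]

theorem weightCount_eq_zero_iff {S : Set (ι → ZMod 2)} {w : ℕ} :
    weightCount S w = 0 ↔ ∀ v ∈ S, hammingNorm v ≠ w := by
  rw [weightCount, Set.ncard_eq_zero, Set.eq_empty_iff_forall_notMem]
  simp

theorem sum_weightCount_mul (S : Submodule (ZMod 2) (ι → ZMod 2)) [Fintype S] (f : ℕ → ℤ) :
    ∑ w ∈ range (Fintype.card ι + 1), weightCount (S : Set (ι → ZMod 2)) w * f w =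
      ∑ c : S, f (hammingNorm (c : ι → ZMod 2)) := by
  classical
  have h_count (w : ℕ) : weightCount (S : Set (ι → ZMod 2)) w =
      #{c : S | hammingNorm (c : ι → ZMod 2) = w} := by
    rw [weightCount_eq_card, ← card_map (Function.Embedding.subtype _)]
    congr 1
    ext v
    simp [and_comm]
  have h_maps : ∀ c ∈ (univ : Finset S),
      hammingNorm (c : ι → ZMod 2) ∈ range (Fintype.card ι + 1) := fun c _ =>
    mem_range_succ_iff.2 hammingNorm_le_card_fintype
  rw [← sum_fiberwise_of_maps_to h_maps]
  refine sum_congr rfl fun w _ => ?_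
  rw [h_count, sum_congr rfl (g := fun _ => f w) fun c hc => by rw [(mem_filter.1 hc).2],
    sum_const, nsmul_eq_mul]

/-- The MacWilliams identity for a coset of `C^⊥`. -/
theorem sum_signChar_mul_krawtchouk (C : Submodule (ZMod 2) (ι → ZMod 2)) [Fintype C]
    (φ : C →ₗ[ZMod 2] ZMod 2) (j : ℕ) :
    ∑ c : C, signChar (φ c) * krawtchouk (Fintype.card ι) j (hammingNorm (c : ι → ZMod 2)) =
      2 ^ Module.finrank (ZMod 2) C *
        weightCount {v : ι → ZMod 2 | ∀ c : C, v ⬝ᵥ (c : ι → ZMod 2) = φ c} j := by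
  classical
  have h_orth (v : ι → ZMod 2) : ∑ c : C, signChar (φ c) * signChar (v ⬝ᵥ (c : ι → ZMod 2)) =
      if ∀ c : C, v ⬝ᵥ (c : ι → ZMod 2) = φ c then (Fintype.card C : ℤ) else 0 := by
    let ψ : C →+ ZMod 2 :=
      (φ + (dotProductBilin (ZMod 2) (ZMod 2) v).comp C.subtype).toAddMonoidHom
    have h_trivial : signChar.compAddMonoidHom ψ = 0 ↔ ∀ c : C, v ⬝ᵥ (c : ι → ZMod 2) = φ c := by
      refine AddChar.eq_zero_iff.trans (forall_congr' fun c => ?_)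
      exact (signChar_eq_one_iff _).trans (CharTwo.add_eq_zero.trans eq_comm)
    rw [← if_congr h_trivial rfl rfl, ← AddChar.sum_eq_ite]
    exact sum_congr rfl fun c _ => (AddChar.map_add_eq_mul _ _ _).symm
  have h_card : (Fintype.card C : ℤ) = 2 ^ Module.finrank (ZMod 2) C := by
    rw [Module.card_eq_pow_finrank (K := ZMod 2), ZMod.card, Nat.cast_pow, Nat.cast_two]
  simp only [← sum_signChar_dotProduct, mul_sum]
  rw [← h_card, sum_comm, sum_congr rfl fun v _ => h_orth v, ← sum_filter, filter_filter, sum_const,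
    nsmul_eq_mul, mul_comm, weightCount_eq_card]
  simp only [Set.mem_ofPred_eq, and_comm]

end MacWilliams

section DualCode

variable {K ι : Type*} [Field K] [Fintype ι]

theorem finrank_add_finrank_dualCode (C : Submodule K (ι → K)) :
    Module.finrank K C + Module.finrank K (dualCode C) = Fintype.card ι := by
  let B : LinearMap.BilinForm K (ι → K) := dotProductBilin K K
  have h_ker : LinearMap.ker B = ⊥ :=
    LinearMap.ker_eq_bot'.2 fun v hv => dotProduct_eq_zero v fun w => LinearMap.congr_fun hv w
  have h_dual : dualCode C = B.orthogonal C :=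
    Submodule.ext fun v => forall₂_congr fun c _ => by
      rw [← dotProduct, dotProduct_comm]
      rfl
  rw [h_dual, LinearMap.BilinForm.finrank_add_finrank_orthogonal', h_ker, inf_bot_eq, finrank_bot,
    add_zero, Module.finrank_fintype_fun_eq_card]

theorem IsSelfDual.two_mul_finrank {C : Submodule K (ι → K)} (hC : IsSelfDual C) :
    2 * Module.finrank K C = Fintype.card ι := by
  have h := finrank_add_finrank_dualCode C
  rwa [← hC, ← two_mul] at h

end DualCode

section BinarySelfDualCode

variable {ι : Type*} [Fintype ι] {C : Submodule (ZMod 2) (ι → ZMod 2)}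

theorem even_hammingNorm_of_mem (hC : C ≤ dualCode C) {c : ι → ZMod 2} (hc : c ∈ C) :
    Even (hammingNorm c) := by
  have h_sq : c * c = c := funext fun i => by
    obtain h | h : c i = 0 ∨ c i = 1 := by generalize c i = a; revert a; decide
    all_goals simp [h]
  rw [← ZMod.natCast_eq_zero_iff_even, ← h_sq, ← dotProduct_eq_natCast_hammingNorm_mul]
  exact hC hc c hc

theorem IsSelfDual.one_mem (hC : IsSelfDual C) : (1 : ι → ZMod 2) ∈ C := by
  rw [hC]
  intro c hc
  rw [← dotProduct, dotProduct_eq_natCast_hammingNorm_mul, one_mul,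
    ZMod.natCast_eq_zero_iff_even]
  exact even_hammingNorm_of_mem hC.le hc

theorem weightCount_zero (C : Submodule (ZMod 2) (ι → ZMod 2)) :
    weightCount (C : Set (ι → ZMod 2)) 0 = 1 := by
  rw [weightCount, Set.ncard_eq_one]
  refine ⟨0, Set.ext fun v => ?_⟩
  simp only [hammingNorm_eq_zero, Set.mem_ofPred_eq, Set.mem_singleton_iff, SetLike.mem_coe]
  exact ⟨And.right, fun h => ⟨h ▸ C.zero_mem, h⟩⟩

theorem IsSelfDual.weightCount_card_sub (hC : IsSelfDual C) {w : ℕ} (hw : w ≤ Fintype.card ι) :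
    weightCount (C : Set (ι → ZMod 2)) (Fintype.card ι - w) =
      weightCount (C : Set (ι → ZMod 2)) w := by
  rw [weightCount, ← Set.ncard_image_of_injective _ (add_right_injective (1 : ι → ZMod 2)),
    weightCount]
  congr 1
  ext v
  have h_inv : 1 + (1 + v) = v := funext fun i => by
    simp [← add_assoc, CharTwo.add_self_eq_zero]
  have h_norm := hammingNorm_one_add v
  have h_le : hammingNorm v ≤ Fintype.card ι := hammingNorm_le_card_fintype
  constructor
  · rintro ⟨u, ⟨hu, hu_norm⟩, rfl⟩
    refine ⟨C.add_mem hC.one_mem hu, ?_⟩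
    change hammingNorm (1 + u) = w
    rw [hammingNorm_one_add]
    lia
  · rintro ⟨hv, hv_norm⟩
    exact ⟨1 + v, ⟨C.add_mem hC.one_mem hv, by lia⟩, h_inv⟩

theorem IsSelfDual.weightCount_eq_zero (hC : IsSelfDual C) {d w : ℕ}
    (hd : ∀ v ∈ C, v ≠ 0 → d ≤ hammingNorm v) (hw_pos : 0 < w) (hw_lt : w < Fintype.card ι)
    (hw : Odd w ∨ w < d ∨ Fintype.card ι < w + d) :
    weightCount (C : Set (ι → ZMod 2)) w = 0 := by
  have h_low {u : ℕ} (hu_pos : 0 < u) (hu : u < d) : weightCount (C : Set (ι → ZMod 2)) u = 0 :=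
    weightCount_eq_zero_iff.2 fun v hv h_norm =>
      (hd v hv (hammingNorm_pos_iff.1 (h_norm ▸ hu_pos))).not_gt (h_norm ▸ hu)
  rcases hw with h_odd | h_lt | h_gt
  · exact weightCount_eq_zero_iff.2 fun v hv h_norm =>
      Nat.not_even_iff_odd.2 h_odd (h_norm ▸ even_hammingNorm_of_mem hC.le hv)
  · exact h_low hw_pos h_lt
  · rw [← hC.weightCount_card_sub hw_lt.le]
    exact h_low (by lia) (by lia)

/-- On a self-orthogonal binary code, half the weight modulo two is a linear functional; it
vanishes exactly on the doubly-even codewords. -/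
def halfWeight (hC : C ≤ dualCode C) : C →ₗ[ZMod 2] ZMod 2 where
  toFun c := (hammingNorm (c : ι → ZMod 2) / 2 : ℕ)
  map_add' a b := by
    have h_sum := hammingNorm_add_add_two_mul (a : ι → ZMod 2) b
    obtain ⟨k, hk⟩ : Even (hammingNorm ((a : ι → ZMod 2) * (b : ι → ZMod 2))) := by
      rw [← ZMod.natCast_eq_zero_iff_even, ← dotProduct_eq_natCast_hammingNorm_mul]
      exact hC a.2 b b.2
    obtain ⟨l, hl⟩ := even_hammingNorm_of_mem hC a.2
    obtain ⟨m, hm⟩ := even_hammingNorm_of_mem hC b.2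
    rw [← Nat.cast_add, ZMod.natCast_eq_natCast_iff, C.coe_add]
    exact (Nat.modEq_iff_dvd).2 ⟨k, by lia⟩
  map_smul' r c := by
    obtain rfl | rfl : r = 0 ∨ r = 1 := by revert r; decide
    all_goals simp

/-- The shadow of a self-orthogonal binary code: the vectors `v` with `v ⬝ᵥ c = wt(c) / 2` modulo
two for all codewords `c`. -/
def codeShadow (C : Submodule (ZMod 2) (ι → ZMod 2)) : Set (ι → ZMod 2) :=
  {v | ∀ c ∈ C, v ⬝ᵥ c = ((hammingNorm c / 2 : ℕ) : ZMod 2)}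

theorem sum_weightCount_mul_krawtchouk (C : Submodule (ZMod 2) (ι → ZMod 2)) (j : ℕ) :
    ∑ w ∈ range (Fintype.card ι + 1),
        weightCount (C : Set (ι → ZMod 2)) w * krawtchouk (Fintype.card ι) j w =
      2 ^ Module.finrank (ZMod 2) C * weightCount (dualCode C : Set (ι → ZMod 2)) j := by
  have := Fintype.ofFinite C
  have h_dual : {v : ι → ZMod 2 | ∀ c : C, v ⬝ᵥ (c : ι → ZMod 2) = (0 : C →ₗ[ZMod 2] ZMod 2) c} =
      dualCode C := Set.ext fun v => Subtype.forall
  rw [sum_weightCount_mul, ← h_dual, ← sum_signChar_mul_krawtchouk]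
  simp only [LinearMap.zero_apply, AddChar.map_zero_eq_one, one_mul]

theorem sum_weightCount_mul_neg_one_pow_mul_krawtchouk (hC : C ≤ dualCode C) (j : ℕ) :
    ∑ w ∈ range (Fintype.card ι + 1), weightCount (C : Set (ι → ZMod 2)) w *
        ((-1) ^ (w / 2) * krawtchouk (Fintype.card ι) j w) =
      2 ^ Module.finrank (ZMod 2) C * weightCount (codeShadow C) j := by
  have := Fintype.ofFinite C
  have h_shadow : {v : ι → ZMod 2 | ∀ c : C, v ⬝ᵥ (c : ι → ZMod 2) = halfWeight hC c} =
      codeShadow C := Set.ext fun v => Subtype.forall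
  rw [sum_weightCount_mul C fun w => (-1) ^ (w / 2) * krawtchouk (Fintype.card ι) j w,
    ← h_shadow, ← sum_signChar_mul_krawtchouk]
  exact sum_congr rfl fun c _ => by rw [← signChar_natCast]; rfl

end BinarySelfDualCode

section WeightDistribution

variable {ι : Type*} [Fintype ι] {C : Submodule (ZMod 2) (ι → ZMod 2)}

/-- The value at `w` of the polynomial with coefficient `a j` at the Krawtchouk polynomial of
degree `2 * j`; only even degrees occur because self-dual binary codes have even weights. -/
def krawtchoukCombination (n : ℕ) {k : ℕ} (a : Fin k → ℤ) (w : ℕ) : ℤ :=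
  ∑ j, a j * krawtchouk n (2 * j) w

theorem IsSelfDual.sum_weightCount_mul_krawtchoukCombination (hC : IsSelfDual C) {k : ℕ}
    (a : Fin k → ℤ) (ε : ℤ) :
    ∑ w ∈ range (Fintype.card ι + 1), weightCount (C : Set (ι → ZMod 2)) w *
        ((1 + ε * (-1) ^ (w / 2)) * krawtchoukCombination (Fintype.card ι) a w) =
      2 ^ Module.finrank (ZMod 2) C *
        ∑ j, a j * (weightCount (C : Set (ι → ZMod 2)) (2 * j) +
          ε * weightCount (codeShadow C) (2 * j)) := by
  have h_dual (j : ℕ) := sum_weightCount_mul_krawtchouk C j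
  rw [← hC] at h_dual
  have h_shadow (j : ℕ) := sum_weightCount_mul_neg_one_pow_mul_krawtchouk hC.le j
  simp only [krawtchoukCombination, mul_sum]
  rw [sum_comm]
  refine sum_congr rfl fun j _ => ?_
  rw [mul_left_comm, mul_add, mul_left_comm _ ε, ← h_dual, ← h_shadow, mul_sum, ← sum_add_distrib,
    mul_sum]
  exact sum_congr rfl fun w _ => by ring

theorem IsSelfDual.sum_weightCount_mul_eq_sum_of_subset (hC : IsSelfDual C) {d : ℕ}
    (hd : ∀ v ∈ C, v ≠ 0 → d ≤ hammingNorm v) (f : ℕ → ℤ) {T : Finset ℕ}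
    (hT : T ⊆ range (Fintype.card ι + 1))
    (hf : ∀ w ∈ range (Fintype.card ι + 1), w ∉ T → f w ≠ 0 →
      0 < w ∧ w < Fintype.card ι ∧ (Odd w ∨ w < d ∨ Fintype.card ι < w + d)) :
    ∑ w ∈ range (Fintype.card ι + 1), weightCount (C : Set (ι → ZMod 2)) w * f w =
      ∑ w ∈ T, weightCount (C : Set (ι → ZMod 2)) w * f w := by
  refine (sum_subset hT fun w hw hwT => ?_).symm
  by_cases h_zero : f w = 0
  · rw [h_zero, mul_zero]
  · obtain ⟨hw_pos, hw_lt, h⟩ := hf w hw hwT h_zero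
    rw [hC.weightCount_eq_zero hd hw_pos hw_lt h, Nat.cast_zero, zero_mul]

variable (hC : IsSelfDual C) (h_card : Fintype.card ι = 68)
  (hd : ∀ v ∈ C, v ≠ 0 → 12 ≤ hammingNorm v)

include hC h_card hd

theorem IsSelfDual.weightCount_twelve :
    (weightCount (C : Set (ι → ZMod 2)) 12 : ℤ) = 442 + 4 *
      (182 * weightCount (codeShadow C) 0 + 104 * weightCount (codeShadow C) 2 +
        26 * weightCount (codeShadow C) 4 + 14 * weightCount (codeShadow C) 6 +
        2 * weightCount (codeShadow C) 8 + weightCount (codeShadow C) 10) := by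
  have h_rank : Module.finrank (ZMod 2) C = 34 := by have := hC.two_mul_finrank; lia
  have h_low {w : ℕ} (hw : 0 < w) (hw' : w < 12) :=
    hC.weightCount_eq_zero hd hw (by lia) (Or.inr (Or.inl hw'))
  have h_56 := hC.weightCount_card_sub (w := 12) (by lia)
  have h_68 := hC.weightCount_card_sub (w := 0) (by lia)
  -- Up to the factor `2 ^ 30`, the polynomial is `choose (13 - w / 4) 10`: it vanishes at the
  -- multiples of four from 16 to 52.
  have h_sum := hC.sum_weightCount_mul_krawtchoukCombination ![182, 104, 26, 14, 2, 1] 1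
  rw [hC.sum_weightCount_mul_eq_sum_of_subset hd _ (T := {0, 12, 56, 68})
    (by rw [h_card]; decide) (by rw [h_card]; decide +kernel)] at h_sum
  rw [h_card] at h_56 h_68 h_sum
  have h_values : ∀ w ∈ ({0, 12, 56, 68} : Finset ℕ),
      (1 + 1 * (-1) ^ (w / 2)) * krawtchoukCombination 68 ![182, 104, 26, 14, 2, 1] w =
        if w = 0 ∨ w = 68 then 286 * 2 ^ 31 else 2 ^ 31 := by decide +kernel
  rw [sum_congr rfl fun w hw => by rw [h_values w hw], h_rank] at h_sum
  norm_num [Fin.sum_univ_succ, h_low, h_56, h_68, weightCount_zero] at h_sum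
  linarith

theorem IsSelfDual.weightCount_fourteen :
    (weightCount (C : Set (ι → ZMod 2)) 14 : ℤ) = 14960 - 8 *
      (1870 * weightCount (codeShadow C) 0 + 616 * weightCount (codeShadow C) 2 +
        194 * weightCount (codeShadow C) 4 + 46 * weightCount (codeShadow C) 6 +
        10 * weightCount (codeShadow C) 8 + weightCount (codeShadow C) 10) := by
  have h_rank : Module.finrank (ZMod 2) C = 34 := by have := hC.two_mul_finrank; lia
  have h_low {w : ℕ} (hw : 0 < w) (hw' : w < 12) :=
    hC.weightCount_eq_zero hd hw (by lia) (Or.inr (Or.inl hw'))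
  have h_54 := hC.weightCount_card_sub (w := 14) (by lia)
  -- The polynomial vanishes at the weights congruent to two modulo four from 18 to 50.
  have h_sum :=
    hC.sum_weightCount_mul_krawtchoukCombination ![1870, 616, 194, 46, 10, 1] (-1)
  rw [hC.sum_weightCount_mul_eq_sum_of_subset hd _ (T := {14, 54})
    (by rw [h_card]; decide) (by rw [h_card]; decide +kernel)] at h_sum
  rw [h_card] at h_54 h_sum
  have h_values : ∀ w ∈ ({14, 54} : Finset ℕ),
      (1 + -1 * (-1) ^ (w / 2)) * krawtchoukCombination 68 ![1870, 616, 194, 46, 10, 1] w =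
        2 ^ 30 := by decide +kernel
  rw [sum_congr rfl fun w hw => by rw [h_values w hw], h_rank] at h_sum
  norm_num [Fin.sum_univ_succ, h_low, h_54, weightCount_zero] at h_sum
  linarith

end WeightDistribution

section SystematicCode

theorem append_inj_iff {α : Type*} {m n : ℕ} {a c : Fin m → α} {b d : Fin n → α} :
    Fin.append a b = Fin.append c d ↔ a = c ∧ b = d :=
  ((Fin.appendEquiv m n).injective.eq_iff (a := (a, b)) (b := (c, d))).trans Prod.mk_inj

theorem hammingNorm_append {α : Type*} [Zero α] [DecidableEq α] {m n : ℕ} (a : Fin m → α)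
    (b : Fin n → α) : hammingNorm (Fin.append a b) = hammingNorm a + hammingNorm b := by
  simp only [hammingNorm, card_filter, Fin.sum_univ_add, Fin.append_left, Fin.append_right]

theorem append_dotProduct_append {R : Type*} [CommRing R] {m n : ℕ} (a c : Fin m → R)
    (b d : Fin n → R) : Fin.append a b ⬝ᵥ Fin.append c d = a ⬝ᵥ c + b ⬝ᵥ d := by
  simp only [dotProduct, Fin.sum_univ_add, Fin.append_left, Fin.append_right]

variable {R : Type*} [CommRing R] {m n : ℕ}

/-- The encoder of the systematic code with generator matrix `(1 | A)`. -/
def systematicEncoder (A : Matrix (Fin m) (Fin n) R) : (Fin m → R) →ₗ[R] Fin (m + n) → R where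
  toFun x := Fin.append x (x ᵥ* A)
  map_add' x y := by
    ext i
    refine Fin.addCases (fun i => ?_) (fun i => ?_) i <;> simp [add_vecMul]
  map_smul' r x := by
    ext i
    refine Fin.addCases (fun i => ?_) (fun i => ?_) i <;> simp [smul_vecMul]

theorem systematicEncoder_apply (A : Matrix (Fin m) (Fin n) R) (x : Fin m → R) :
    systematicEncoder A x = Fin.append x (x ᵥ* A) :=
  rfl

/-- The systematic code with generator matrix `(1 | A)`. -/
def systematicCode (A : Matrix (Fin m) (Fin n) R) : Submodule R (Fin (m + n) → R) :=
  LinearMap.range (systematicEncoder A)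

/-- The coset of the systematic code of `A` through the vector `(0 | t)`. -/
def systematicCoset (A : Matrix (Fin m) (Fin n) R) (t : Fin n → R) : Set (Fin (m + n) → R) :=
  Set.range fun x => Fin.append x (x ᵥ* A + t)

theorem coe_systematicCode (A : Matrix (Fin m) (Fin n) R) :
    (systematicCode A : Set (Fin (m + n) → R)) = systematicCoset A 0 := by
  simp only [systematicCoset, add_zero]
  rfl

theorem append_mem_systematicCoset {A : Matrix (Fin m) (Fin n) R} {t : Fin n → R}
    {a : Fin m → R} {b : Fin n → R} :
    Fin.append a b ∈ systematicCoset A t ↔ b = a ᵥ* A + t := by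
  constructor
  · rintro ⟨x, hx⟩
    obtain ⟨rfl, rfl⟩ := append_inj_iff.1 hx
    rfl
  · rintro rfl
    exact ⟨a, rfl⟩

theorem append_mem_systematicCode {A : Matrix (Fin m) (Fin n) R}
    {a : Fin m → R} {b : Fin n → R} :
    Fin.append a b ∈ systematicCode A ↔ b = a ᵥ* A := by
  rw [← SetLike.mem_coe, coe_systematicCode, append_mem_systematicCoset, add_zero]

theorem append_mem_dualCode_systematicCode {A : Matrix (Fin m) (Fin n) R}
    {a : Fin m → R} {b : Fin n → R} :
    Fin.append a b ∈ dualCode (systematicCode A) ↔ a = -(A *ᵥ b) := by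
  have h_pair (x : Fin m → R) :
      Fin.append a b ⬝ᵥ systematicEncoder A x = (a + A *ᵥ b) ⬝ᵥ x := by
    rw [systematicEncoder_apply, append_dotProduct_append,
      add_dotProduct, dotProduct_comm b, ← dotProduct_mulVec, dotProduct_comm x]
  rw [← add_eq_zero_iff_eq_neg]
  constructor
  · exact fun h => dotProduct_eq_zero _ fun x => (h_pair x).symm.trans (h _ ⟨x, rfl⟩)
  · rintro h _ ⟨x, rfl⟩
    rw [← dotProduct, h_pair, h, zero_dotProduct]

theorem isSelfDual_systematicCode {A : Matrix (Fin m) (Fin m) R} (hA : A * Aᵀ = -1) :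
    IsSelfDual (systematicCode A) := by
  have hA' : Aᵀ * A = -1 := by
    rw [← neg_eq_iff_eq_neg, ← neg_mul]
    exact mul_eq_one_comm.1 (by rw [mul_neg, hA, neg_neg])
  refine Submodule.ext fun v => ?_
  rw [← Fin.append_castAdd_natAdd (f := v), append_mem_systematicCode,
    append_mem_dualCode_systematicCode]
  constructor
  · intro h
    rw [h, ← vecMul_transpose, vecMul_vecMul, hA, vecMul_neg,
      vecMul_one, neg_neg]
  · intro h
    rw [h, ← vecMul_transpose, neg_vecMul, vecMul_vecMul, hA',
      vecMul_neg, vecMul_one, neg_neg]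

end SystematicCode

section SystematicShadow

theorem mem_codeShadow_iff_sub_mem {ι : Type*} [Fintype ι]
    {C : Submodule (ZMod 2) (ι → ZMod 2)} {s v : ι → ZMod 2} (hs : s ∈ codeShadow C) :
    v ∈ codeShadow C ↔ v - s ∈ dualCode C :=
  forall₂_congr fun c hc => by
    rw [← dotProduct, sub_dotProduct, sub_eq_zero, hs c hc]

variable {m n : ℕ}

theorem append_zero_mem_codeShadow {A : Matrix (Fin m) (Fin n) (ZMod 2)} {t : Fin n → ZMod 2}
    (hA : systematicCode A ≤ dualCode (systematicCode A))
    (ht : ∀ i, t ⬝ᵥ A i = (((1 + hammingNorm (A i)) / 2 : ℕ) : ZMod 2)) :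
    Fin.append 0 t ∈ codeShadow (systematicCode A) := by
  have h_eq : (dotProductBilin (ZMod 2) (ZMod 2) (Fin.append 0 t)).comp (systematicEncoder A) =
      (halfWeight hA).comp (systematicEncoder A).rangeRestrict := by
    refine (Pi.basisFun (ZMod 2) (Fin m)).ext fun i => ?_
    have h_norm : hammingNorm (Pi.single i 1 : Fin m → ZMod 2) = 1 := by
      simp [hammingNorm, Pi.single_apply, filter_eq']
    have h_encode : systematicEncoder A (Pi.single i 1) = Fin.append (Pi.single i 1) (A i) := by
      rw [systematicEncoder_apply, single_one_vecMul]
      rfl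
    rw [Pi.basisFun_apply]
    change Fin.append 0 t ⬝ᵥ systematicEncoder A (Pi.single i 1) =
      ((hammingNorm (systematicEncoder A (Pi.single i 1)) / 2 : ℕ) : ZMod 2)
    rw [h_encode, append_dotProduct_append, zero_dotProduct, zero_add, ht, hammingNorm_append,
      h_norm]
  rintro _ ⟨x, rfl⟩
  exact LinearMap.congr_fun h_eq x

theorem codeShadow_systematicCode {A : Matrix (Fin m) (Fin m) (ZMod 2)} {t : Fin m → ZMod 2}
    (hA : IsSelfDual (systematicCode A))
    (ht : ∀ i, t ⬝ᵥ A i = (((1 + hammingNorm (A i)) / 2 : ℕ) : ZMod 2)) :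
    codeShadow (systematicCode A) = systematicCoset A t := by
  ext v
  have h_sub : v - Fin.append 0 t = Fin.append (fun i => v (Fin.castAdd m i))
      ((fun i => v (Fin.natAdd m i)) - t) := by
    ext i
    refine Fin.addCases (fun i => ?_) (fun i => ?_) i <;>
      simp only [Pi.sub_apply, Fin.append_left, Fin.append_right, Pi.zero_apply, sub_zero]
  rw [mem_codeShadow_iff_sub_mem (append_zero_mem_codeShadow hA.le ht), ← hA, h_sub,
    append_mem_systematicCode, sub_eq_iff_eq_add]
  conv_rhs => rw [← Fin.append_castAdd_natAdd (f := v), append_mem_systematicCoset]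

/-- The number of vectors in the coset of `(0 | t)` whose left half has weight `i` and whose right
half has weight `j`. -/
def splitCount (A : Matrix (Fin m) (Fin n) (ZMod 2)) (t : Fin n → ZMod 2) (i j : ℕ) : ℕ :=
  #{x | hammingNorm x = i ∧ hammingNorm (x ᵥ* A + t) = j}

theorem weightCount_systematicCoset (A : Matrix (Fin m) (Fin n) (ZMod 2)) (t : Fin n → ZMod 2)
    (w : ℕ) :
    weightCount (systematicCoset A t) w = ∑ p ∈ antidiagonal w, splitCount A t p.1 p.2 := by
  have h_inj : Function.Injective fun x => Fin.append x (x ᵥ* A + t) := fun x y h =>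
    (append_inj_iff.1 h).1
  have h_preimage : {v | v ∈ systematicCoset A t ∧ hammingNorm v = w} =
      (fun x => Fin.append x (x ᵥ* A + t)) ''
        {x | hammingNorm x + hammingNorm (x ᵥ* A + t) = w} := by
    ext v
    constructor
    · rintro ⟨⟨x, rfl⟩, hx⟩
      exact ⟨x, (hammingNorm_append _ _).symm.trans hx, rfl⟩
    · rintro ⟨x, hx, rfl⟩
      exact ⟨⟨x, rfl⟩, (hammingNorm_append _ _).trans hx⟩
  rw [weightCount, h_preimage, Set.ncard_image_of_injective _ h_inj, ← Finset.coe_filter_univ,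
    Set.ncard_coe_finset, card_eq_sum_card_fiberwise
      (f := fun x => (hammingNorm x, hammingNorm (x ᵥ* A + t))) (t := antidiagonal w)
      fun x hx => HasAntidiagonal.mem_antidiagonal.2 (mem_filter.1 hx).2]
  refine sum_congr rfl fun p hp => congrArg card (ext fun x => ?_)
  rw [HasAntidiagonal.mem_antidiagonal] at hp
  simp only [mem_filter, mem_univ, true_and, Prod.ext_iff, and_iff_right_iff_imp]
  exact fun h => by rw [h.1, h.2, hp]

theorem splitCount_transpose {A : Matrix (Fin m) (Fin m) (ZMod 2)} (hA : A * Aᵀ = 1)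
    (t : Fin m → ZMod 2) (i j : ℕ) :
    splitCount Aᵀ (A *ᵥ t) j i = splitCount A t i j := by
  have hA' : Aᵀ * A = 1 := mul_eq_one_comm.1 hA
  have h_left (x : Fin m → ZMod 2) : (x ᵥ* A + t) ᵥ* Aᵀ + A *ᵥ t = x := by
    rw [add_vecMul, vecMul_vecMul, hA, vecMul_one, vecMul_transpose,
      add_assoc, ZModModule.add_self, add_zero]
  have h_right (y : Fin m → ZMod 2) : (y ᵥ* Aᵀ + A *ᵥ t) ᵥ* A + t = y := by
    rw [← vecMul_transpose, add_vecMul, vecMul_vecMul, vecMul_vecMul,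
      hA', vecMul_one, vecMul_one, add_assoc, ZModModule.add_self, add_zero]
  refine card_bij' (fun y _ => y ᵥ* Aᵀ + A *ᵥ t) (fun x _ => x ᵥ* A + t) ?_ ?_
    (fun y _ => h_right y) (fun x _ => h_left x)
  · simp +contextual [h_right]
  · simp +contextual [h_left]

end SystematicShadow

section BitSlicing

variable {α : Type*}

/-- The natural number whose bit `p` is the value of `f` at entry `p` of `L`. -/
def packBits (f : α → Bool) (L : List α) : ℕ :=
  L.foldr (fun a n => Nat.bit (f a) n) 0

theorem packBits_cons (f : α → Bool) (a : α) (L : List α) :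
    packBits f (a :: L) = Nat.bit (f a) (packBits f L) :=
  rfl

theorem packBits_map {β : Type*} (f : β → Bool) (g : α → β) (L : List α) :
    packBits f (L.map g) = packBits (fun a => f (g a)) L :=
  List.foldr_map

theorem packBits_append (f : α → Bool) (L M : List α) :
    packBits f (L ++ M) = packBits f L ||| packBits f M <<< L.length := by
  induction L with
  | nil => simp [packBits]
  | cons a L ih =>
    rw [List.cons_append, packBits_cons, ih, packBits_cons, List.length_cons, Nat.shiftLeft_succ,
      ← Nat.bit_false_apply, Nat.lor_bit, Bool.or_false]

theorem packBits_xor (f g : α → Bool) (L : List α) :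
    packBits f L ^^^ packBits g L = packBits (fun a => f a ^^ g a) L := by
  induction L with
  | nil => exact Nat.xor_self 0
  | cons a L ih => rw [packBits_cons, packBits_cons, Nat.xor_bit, ih, packBits_cons]

theorem packBits_and (f g : α → Bool) (L : List α) :
    packBits f L &&& packBits g L = packBits (fun a => f a && g a) L := by
  induction L with
  | nil => exact Nat.and_self 0
  | cons a L ih => rw [packBits_cons, packBits_cons, Nat.land_bit, ih, packBits_cons]

theorem packBits_const (b : Bool) (L : List α) :
    packBits (fun _ => b) L = b.toNat * (2 ^ L.length - 1) := by
  induction L with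
  | nil => simp [packBits]
  | cons a L ih =>
    rw [packBits_cons, ih, Nat.bit_val, List.length_cons, pow_succ]
    have := Nat.one_le_two_pow (n := L.length)
    cases b with
    | false => simp
    | true => simp only [Bool.toNat_true]; lia

theorem packBits_mod_two_pow (f : α → Bool) (L : List α) (n : ℕ) :
    packBits f L % 2 ^ n = packBits f (L.take n) := by
  induction L generalizing n with
  | nil => simp [packBits]
  | cons a L ih =>
    cases n with
    | zero => simp [packBits, Nat.mod_one]
    | succ n =>
      rw [List.take_succ_cons, packBits_cons, packBits_cons, ← ih, pow_succ', Nat.mod_mul,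
        Nat.bit_mod_two, Nat.bit_div_two, Nat.bit_val, add_comm]

theorem packBits_div_two_pow (f : α → Bool) (L : List α) (n : ℕ) :
    packBits f L / 2 ^ n = packBits f (L.drop n) := by
  induction L generalizing n with
  | nil => simp [packBits]
  | cons a L ih =>
    cases n with
    | zero => simp [packBits]
    | succ n =>
      rw [List.drop_succ_cons, packBits_cons, ← ih, pow_succ', ← Nat.div_div_eq_div_mul,
        Nat.bit_div_two]

/-- The number of ones among the lowest `2 ^ k` bits of `n`, by repeated halving. The test for zero
only makes the evaluation on sparse numbers fast. -/
def bitCount : ℕ → ℕ → ℕ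
  | 0, n => n
  | k + 1, n => if n = 0 then 0 else bitCount k (n % 2 ^ 2 ^ k) + bitCount k (n / 2 ^ 2 ^ k)

theorem bitCount_zero_right (k : ℕ) : bitCount k 0 = 0 := by
  cases k <;> simp [bitCount]

theorem bitCount_packBits (f : α → Bool) (k : ℕ) {L : List α} (hL : L.length ≤ 2 ^ k) :
    bitCount k (packBits f L) = L.countP f := by
  induction k generalizing L with
  | zero =>
    match L, hL with
    | [], _ => rfl
    | [a], _ => cases h : f a <;> simp [bitCount, packBits, h]
  | succ k ih =>
    have h_split : bitCount (k + 1) (packBits f L) =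
        bitCount k (packBits f L % 2 ^ 2 ^ k) + bitCount k (packBits f L / 2 ^ 2 ^ k) := by
      by_cases h : packBits f L = 0
      · simp [h, bitCount_zero_right]
      · rw [bitCount, if_neg h]
    rw [h_split, packBits_mod_two_pow, packBits_div_two_pow, ih (by simp), ih (by simp; lia),
      ← List.countP_append, List.take_append_drop]

/-- Given the packed values `Ps` of a list of predicates and the packed constant `one`, the packed
truth value of the statement that exactly `d` of the predicates hold. -/
def exactlyMask (one : ℕ) : List ℕ → ℕ → ℕ
  | [], 0 => one
  | [], _ + 1 => 0
  | P :: Ps, 0 => exactlyMask one Ps 0 &&& (one ^^^ P)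
  | P :: Ps, d + 1 =>
    exactlyMask one Ps (d + 1) ^^^ (P &&& (exactlyMask one Ps (d + 1) ^^^ exactlyMask one Ps d))

theorem exactlyMask_packBits (fs : List (α → Bool)) (L : List α) (d : ℕ) :
    exactlyMask (packBits (fun _ => true) L) (fs.map fun f => packBits f L) d =
      packBits (fun a => decide (fs.countP (fun f => f a) = d)) L := by
  induction fs generalizing d with
  | nil =>
    cases d with
    | zero => rfl
    | succ d => simp [exactlyMask, packBits_const]
  | cons f fs ih =>
    cases d with
    | zero =>
      rw [List.map_cons, exactlyMask, ih, packBits_xor, packBits_and]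
      congr! 2 with a
      cases h : f a <;> simp [h]
    | succ d =>
      rw [List.map_cons, exactlyMask, ih, ih, packBits_xor, packBits_and, packBits_xor]
      congr! 2 with a
      cases h : f a <;> simp [h]

end BitSlicing

section SlicedEnumeration

variable {m n : ℕ}

/-- The binary vectors of length `m` and weight `j`. -/
def constantWeightVectors : (m : ℕ) → ℕ → List (Fin m → ZMod 2)
  | _, 0 => [0]
  | 0, _ + 1 => []
  | m + 1, j + 1 => (constantWeightVectors m (j + 1)).map (Fin.cons 0) ++
      (constantWeightVectors m j).map (Fin.cons 1)

theorem length_constantWeightVectors (m j : ℕ) :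
    (constantWeightVectors m j).length = m.choose j := by
  fun_induction constantWeightVectors m j with
  | case1 => simp
  | case2 => simp
  | case3 m j ih₁ ih₂ => simp [ih₁, ih₂, Nat.choose_succ_succ, add_comm]

theorem hammingNorm_cons (a : ZMod 2) (x : Fin m → ZMod 2) :
    hammingNorm (Fin.cons a x : Fin (m + 1) → ZMod 2) =
      (if a ≠ 0 then 1 else 0) + hammingNorm x := by
  simp only [hammingNorm, card_filter, Fin.sum_univ_succ, Fin.cons_zero, Fin.cons_succ]

theorem mem_constantWeightVectors {j : ℕ} {x : Fin m → ZMod 2} :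
    x ∈ constantWeightVectors m j ↔ hammingNorm x = j := by
  induction m generalizing j with
  | zero => cases j <;> simp [constantWeightVectors, hammingNorm, Subsingleton.elim x 0]
  | succ m ih =>
    cases j with
    | zero => simp [constantWeightVectors]
    | succ j =>
      induction x using Fin.consCases with
      | _ a x =>
        obtain rfl | rfl : a = 0 ∨ a = 1 := by revert a; decide
        all_goals
          simp [constantWeightVectors, hammingNorm_cons, ih, Fin.cons_inj, add_comm 1]

theorem nodup_constantWeightVectors (m j : ℕ) : (constantWeightVectors m j).Nodup := by
  fun_induction constantWeightVectors m j with
  | case1 => simp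
  | case2 => simp
  | case3 m j ih₁ ih₂ =>
    refine List.Nodup.append (ih₁.map (Fin.cons_right_injective _))
      (ih₂.map (Fin.cons_right_injective _)) ?_
    simp [List.disjoint_left, Fin.cons_inj]

theorem countP_constantWeightVectors (P : (Fin m → ZMod 2) → Prop) [DecidablePred P] (j : ℕ) :
    (constantWeightVectors m j).countP (fun x => decide (P x)) =
      #{x | hammingNorm x = j ∧ P x} := by
  rw [List.countP_eq_length_filter,
    ← List.toFinset_card_of_nodup ((nodup_constantWeightVectors m j).filter _)]
  congr 1
  ext x
  simp [mem_constantWeightVectors]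

/-- The packed values `x ⬝ᵥ c` over all `x` of weight `j`, in the order of
`constantWeightVectors m j`. -/
def dotProductSlice : (m : ℕ) → (Fin m → ZMod 2) → ℕ → ℕ
  | 0, _, _ => 0
  | _ + 1, _, 0 => 0
  | m + 1, c, j + 1 => dotProductSlice m (Fin.tail c) (j + 1) |||
      (dotProductSlice m (Fin.tail c) j ^^^ (c 0).val * (2 ^ m.choose j - 1)) <<<
        m.choose (j + 1)

theorem decide_add_ne_zero (a b : ZMod 2) :
    decide (a + b ≠ 0) = (decide (a ≠ 0) ^^ decide (b ≠ 0)) := by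
  revert a b
  decide

theorem val_mul_eq_packBits (a : ZMod 2) (m j : ℕ) :
    a.val * (2 ^ m.choose j - 1) =
      packBits (fun _ => decide (a ≠ 0)) (constantWeightVectors m j) := by
  have h_val : ∀ a : ZMod 2, a.val = (decide (a ≠ 0)).toNat := by decide
  rw [packBits_const, length_constantWeightVectors, h_val]

theorem dotProductSlice_eq_packBits (c : Fin m → ZMod 2) (j : ℕ) :
    dotProductSlice m c j =
      packBits (fun x => decide (x ⬝ᵥ c ≠ 0)) (constantWeightVectors m j) := by
  induction m generalizing j with
  | zero => cases j <;> simp [dotProductSlice, constantWeightVectors, packBits]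
  | succ m ih =>
    cases j with
    | zero => simp [dotProductSlice, constantWeightVectors, packBits]
    | succ j =>
      have h_cons (a : ZMod 2) (x : Fin m → ZMod 2) :
          (Fin.cons a x : Fin (m + 1) → ZMod 2) ⬝ᵥ c = x ⬝ᵥ Fin.tail c + a * c 0 := by
        simp only [dotProduct, Fin.sum_univ_succ, Fin.cons_zero, Fin.cons_succ, Fin.tail, add_comm]
      rw [dotProductSlice, ih, ih, val_mul_eq_packBits, packBits_xor, constantWeightVectors,
        packBits_append, packBits_map, packBits_map, List.length_map,
        length_constantWeightVectors]
      simp only [h_cons, decide_add_ne_zero, zero_mul, one_mul, add_zero]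

/-- An evaluation of `splitCount A t i j` that treats all `x` of weight `i` at once, with one
packed number for each coordinate of `x ᵥ* A + t`. -/
def slicedSplitCount (A : Matrix (Fin m) (Fin n) (ZMod 2)) (t : Fin n → ZMod 2) (i j : ℕ) : ℕ :=
  let one := 2 ^ m.choose i - 1
  let slices := (List.finRange n).map fun k =>
    dotProductSlice m (fun r => A r k) i ^^^ (t k).val * one
  bitCount ((m.choose i).log2 + 1) (exactlyMask one slices j)

theorem hammingNorm_eq_countP (y : Fin n → ZMod 2) :
    hammingNorm y = (List.finRange n).countP fun k => decide (y k ≠ 0) := by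
  rw [List.countP_eq_length_filter]
  rfl

theorem slicedSplitCount_eq_splitCount (A : Matrix (Fin m) (Fin n) (ZMod 2)) (t : Fin n → ZMod 2)
    (i j : ℕ) : slicedSplitCount A t i j = splitCount A t i j := by
  have h_one : 2 ^ m.choose i - 1 = packBits (fun _ => true) (constantWeightVectors m i) := by
    rw [packBits_const, length_constantWeightVectors, Bool.toNat_true, one_mul]
  have h_slices :
      ((List.finRange n).map fun k =>
        dotProductSlice m (fun r => A r k) i ^^^ (t k).val * (2 ^ m.choose i - 1)) =
      ((List.finRange n).map fun k (x : Fin m → ZMod 2) =>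
        decide ((x ᵥ* A + t) k ≠ 0)).map fun f => packBits f (constantWeightVectors m i) := by
    rw [List.map_map]
    refine List.map_congr_left fun k _ => ?_
    rw [dotProductSlice_eq_packBits, val_mul_eq_packBits, packBits_xor]
    simp only [← decide_add_ne_zero]
    rfl
  have h_length : (constantWeightVectors m i).length ≤ 2 ^ ((m.choose i).log2 + 1) := by
    rw [length_constantWeightVectors]
    exact Nat.lt_log2_self.le
  rw [slicedSplitCount, h_slices, h_one, exactlyMask_packBits, bitCount_packBits _ _ h_length]
  simp only [List.countP_map]
  rw [countP_constantWeightVectors, splitCount]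
  simp only [hammingNorm_eq_countP (_ + t)]
  rfl

/-- An evaluation of the weight distribution of a coset of a systematic code with `A * Aᵀ = 1`. By
symmetry of the two halves, the enumerated half can be taken to be the lighter one. -/
def slicedWeightCount (A : Matrix (Fin m) (Fin m) (ZMod 2)) (t : Fin m → ZMod 2) (w : ℕ) : ℕ :=
  ∑ p ∈ antidiagonal w, if p.1 ≤ p.2 then slicedSplitCount A t p.1 p.2
    else slicedSplitCount Aᵀ (A *ᵥ t) p.2 p.1

theorem weightCount_eq_slicedWeightCount {A : Matrix (Fin m) (Fin m) (ZMod 2)} (hA : A * Aᵀ = 1)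
    (t : Fin m → ZMod 2) (w : ℕ) :
    weightCount (systematicCoset A t) w = slicedWeightCount A t w := by
  simp only [weightCount_systematicCoset, slicedWeightCount, slicedSplitCount_eq_splitCount,
    splitCount_transpose hA, ite_self]

end SlicedEnumeration

section ExtremalCode

/-- The rows of the right half of the generator matrix `(1 | A)`, with entry `j` as bit `j`. -/
def codeRows : List ℕ :=
  [5109563524, 2904063992, 12044910623, 15707504673, 5104918594, 599451182, 16901721155,
   16594008198, 3658927868, 11741135639, 15605978159, 1820232001, 11930899074, 14401534708,
   11893484056, 7926467263, 16025815953, 3195210194, 15218765140, 4599724712, 8015519808,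
   8261050496, 1892204528, 8026931216, 14042488864, 5548398279, 10713723518, 7267861987,
   11649389878, 749398892, 6037700623, 7245668336, 870440960, 11475484672]

/-- The matrix `A` for which `(1 | A)` generates the code. -/
def codeMatrix : Matrix (Fin 34) (Fin 34) (ZMod 2) :=
  of fun i j => if (codeRows.getD i 0).testBit j then 1 else 0

/-- The right half of a vector `(0 | t)` in the shadow of the code. -/
def shadowVector : Fin 34 → ZMod 2 :=
  fun j => if 26 ≤ j ∧ j < 32 then 1 else 0

theorem codeMatrix_mul_transpose : codeMatrix * codeMatrixᵀ = 1 := by decide +kernel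

theorem shadowVector_dotProduct_codeMatrix (i : Fin 34) :
    shadowVector ⬝ᵥ codeMatrix i = (((1 + hammingNorm (codeMatrix i)) / 2 : ℕ) : ZMod 2) := by
  decide +kernel +revert

theorem slicedWeightCount_code :
    ∀ w ∈ ({2, 4, 6, 8, 10} : Finset ℕ), slicedWeightCount codeMatrix 0 w = 0 := by
  decide +kernel

theorem slicedWeightCount_shadow : ∀ w ∈ ({0, 2, 4, 6, 8, 10} : Finset ℕ),
    slicedWeightCount codeMatrix shadowVector w =
      if w = 6 then 1 else if w = 10 then 165 else 0 := by
  decide +kernel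

theorem isSelfDual_code : IsSelfDual (systematicCode codeMatrix) :=
  isSelfDual_systematicCode (codeMatrix_mul_transpose.trans (ZModModule.neg_eq_self 1).symm)

theorem twelve_le_hammingNorm_of_mem_code {v : Fin (34 + 34) → ZMod 2}
    (hv : v ∈ systematicCode codeMatrix) (hv0 : v ≠ 0) : 12 ≤ hammingNorm v := by
  by_contra! h_lt
  have h_even := even_hammingNorm_of_mem isSelfDual_code.le hv
  have h_pos := hammingNorm_pos_iff.2 hv0
  have h_mem : hammingNorm v ∈ ({2, 4, 6, 8, 10} : Finset ℕ) := by
    generalize hammingNorm v = w at *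
    interval_cases w <;> revert h_even <;> decide
  have h_zero := slicedWeightCount_code _ h_mem
  rw [← weightCount_eq_slicedWeightCount codeMatrix_mul_transpose, ← coe_systematicCode] at h_zero
  exact weightCount_eq_zero_iff.1 h_zero v hv rfl

theorem weightCount_codeShadow {w : ℕ} (hw : w ∈ ({0, 2, 4, 6, 8, 10} : Finset ℕ)) :
    weightCount (codeShadow (systematicCode codeMatrix)) w =
      if w = 6 then 1 else if w = 10 then 165 else 0 := by
  rw [codeShadow_systematicCode isSelfDual_code shadowVector_dotProduct_codeMatrix,
    weightCount_eq_slicedWeightCount codeMatrix_mul_transpose, slicedWeightCount_shadow w hw]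

end ExtremalCode

/-- There exists a binary self-dual `[68, 34, 12]` code with weight enumerator
`W_{68,2}` (γ = 1, β = 179): minimum nonzero weight 12, exactly 1158 codewords of weight 12
and exactly 13272 codewords of weight 14. -/
theorem exists_selfDual_68_15 :
    ∃ C : Submodule (ZMod 2) (Fin 68 → ZMod 2),
      IsSelfDual C ∧
      (∀ v ∈ C, v ≠ 0 → 12 ≤ hammingNorm v) ∧
      (∃ v ∈ C, hammingNorm v = 12) ∧
      {v | v ∈ C ∧ hammingNorm v = 12}.ncard = 1158 ∧
      {v | v ∈ C ∧ hammingNorm v = 14}.ncard = 13272 := by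
  let C : Submodule (ZMod 2) (Fin 68 → ZMod 2) := systematicCode codeMatrix
  have h_dual : IsSelfDual C := isSelfDual_code
  have h_min : ∀ v ∈ C, v ≠ 0 → 12 ≤ hammingNorm v := fun _ => twelve_le_hammingNorm_of_mem_code
  have h_shadow {w : ℕ} (hw : w ∈ ({0, 2, 4, 6, 8, 10} : Finset ℕ)) :
      weightCount (codeShadow C) w = if w = 6 then 1 else if w = 10 then 165 else 0 :=
    weightCount_codeShadow hw
  have h_twelve : weightCount (C : Set (Fin 68 → ZMod 2)) 12 = 1158 := by
    have h := h_dual.weightCount_twelve (Fintype.card_fin 68) h_min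
    norm_num [h_shadow] at h
    exact_mod_cast h
  have h_fourteen : weightCount (C : Set (Fin 68 → ZMod 2)) 14 = 13272 := by
    have h := h_dual.weightCount_fourteen (Fintype.card_fin 68) h_min
    norm_num [h_shadow] at h
    exact_mod_cast h
  have h_exists : ∃ v ∈ C, hammingNorm v = 12 := by
    by_contra! h
    exact absurd (weightCount_eq_zero_iff.2 h) (by rw [h_twelve]; decide)
  exact ⟨C, h_dual, h_min, h_exists, h_twelve, h_fourteen⟩
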